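/- Let a ≥ 3 and b ≥ 0. The partition (a+b, a, 2) is a maximal element in the standard immersion poset on partitions of 2a+b+2 if and only if a ≤ (b+1)(b+2)/2. -/

import Mathlib

open Finset MvPolynomial

/-- A partition of `n`, represented as a weakly decreasing list of positive
integers summing to `n`. -/
def IsPartitionOf (n : ℕ) (l : List ℕ) : Prop :=
  l.Pairwise (· ≥ ·) ∧ (∀ x ∈ l, 0 < x) ∧ l.sum = n

/-- `T : ℕ → ℕ → ℕ` is a semistandard Young tableau of shape `l`
(rows weakly increase, columns strictly increase, entries are `0` outside
of the diagram; entries are 0-indexed, so entry value `k` stands for the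
letter `k+1`). -/
def IsSSYT (l : List ℕ) (T : ℕ → ℕ → ℕ) : Prop :=
  (∀ i j1 j2, j1 ≤ j2 → j2 < l.getD i 0 → T i j1 ≤ T i j2) ∧
  (∀ i1 i2 j, i1 < i2 → j < l.getD i2 0 → T i1 j < T i2 j) ∧
  (∀ i j, l.getD i 0 ≤ j → T i j = 0)

/-- The tableau `T` of shape `l` has content `ν`: for every `k`, the number of
cells of the diagram of `l` whose entry is `k` equals the `(k+1)`-st part of `ν`. -/
def HasContent (l : List ℕ) (T : ℕ → ℕ → ℕ) (ν : List ℕ) : Prop :=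
  ∀ k, Nat.card {c : ℕ × ℕ // c.2 < l.getD c.1 0 ∧ T c.1 c.2 = k} = ν.getD k 0

/-- The Kostka number `K_{l,ν}`: the number of semistandard Young tableaux of
shape `l` and content `ν`. -/
noncomputable def kostka (l ν : List ℕ) : ℕ :=
  Nat.card {T : ℕ → ℕ → ℕ // IsSSYT l T ∧ HasContent l T ν}

/-- `f^λ`, the number of standard Young tableaux of shape `l`. -/
noncomputable def fSYT (l : List ℕ) : ℕ := kostka l (List.replicate l.sum 1)

/-- Dominance order: all partial sums of `l` are at most those of `m`. -/
def DomLE (l m : List ℕ) : Prop := ∀ k, (l.take k).sum ≤ (m.take k).sum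

/-- The standard immersion order: dominance together with `f^λ ≤ f^μ`. -/
def StdLE (l m : List ℕ) : Prop := DomLE l m ∧ fSYT l ≤ fSYT m

/-- Strict standard immersion order. -/
def StdLT (l m : List ℕ) : Prop := StdLE l m ∧ l ≠ m

/-- `m` covers `l` in the standard immersion poset on partitions of `n`. -/
def StdCovBy (n : ℕ) (l m : List ℕ) : Prop :=
  StdLT l m ∧ ∀ ν, IsPartitionOf n ν → StdLT l ν → ¬ StdLT ν m

/-- `l` is a maximal element of the standard immersion poset on partitions of `n`. -/
def StdMaximal (n : ℕ) (l : List ℕ) : Prop :=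
  ∀ m, IsPartitionOf n m → m ≠ l → ¬ StdLE l m

/-- The immersion order on partitions of `n`: `l ≤_I m` iff
`K_{l,α} ≤ K_{m,α}` for every partition `α` of `n`. -/
def ImmersionLE (n : ℕ) (l m : List ℕ) : Prop :=
  ∀ ν, IsPartitionOf n ν → kostka l ν ≤ kostka m ν

/-- Strict immersion order. -/
def ImmersionLT (n : ℕ) (l m : List ℕ) : Prop := ImmersionLE n l m ∧ l ≠ m

/-- `m` covers `l` in the immersion poset on partitions of `n`. -/
def ImmersionCovBy (n : ℕ) (l m : List ℕ) : Prop :=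
  ImmersionLT n l m ∧ ∀ ν, IsPartitionOf n ν → ImmersionLT n l ν → ¬ ImmersionLT n ν m

/-!
Numbering the cells of a Young diagram turns standard Young tableaux into linear extensions of the
diagram. The cell numbered last is a corner, and removing it gives the branching rule for `f^λ`;
the Frobenius formula for shapes with at most three rows satisfies the same recursion.

Every partition dominating `(a + b, a, 2)` has at most three rows, the third of length at most `2`,
and moving single boxes to lower rows leads from it to `(a + b, a, 2)`. The moves can be chosen so
that `f` increases along the way provided it increases under `(x + 1, y, 2) ↦ (x, y + 1, 2)`. For
`x = y + 1 + b` the latter amounts to `2 (y + 1) ≤ (b + 1) (b + 2)`, and the most restrictive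
instance is the last move, `y + 1 = a`. When that one fails, `(a + b + 1, a - 1, 2)` lies above
`(a + b, a, 2)`.
-/

/-! ### Linear extensions -/

section LinearExtension

variable {α : Type*} [Preorder α]

/-- A linear extension of the finite subset `D` of an ordered type, encoded as the strictly monotone
numbering `0, …, #D - 1` of its elements. It is extended by zero outside `D`, so that distinct
functions `T` are distinct linear extensions. -/
structure IsLinearExtension (D : Finset α) (T : α → ℕ) : Prop where
  strictMonoOn : StrictMonoOn T D
  bijOn : Set.BijOn T D (Set.Iio #D)
  eq_zero_of_notMem : ∀ c ∉ D, T c = 0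

/-- The number of linear extensions of the finite subset `D` of an ordered type. -/
noncomputable def numLinearExtensions (D : Finset α) : ℕ :=
  Nat.card {T : α → ℕ // IsLinearExtension D T}

instance finite_isLinearExtension (D : Finset α) :
    Finite {T : α → ℕ // IsLinearExtension D T} := by
  let values (T : {T : α → ℕ // IsLinearExtension D T}) (c : D) : Set.Iio #D :=
    ⟨T.1 c, T.2.bijOn.mapsTo c.2⟩
  refine Finite.of_injective values fun T T' h ↦ Subtype.ext (funext fun c ↦ ?_)
  by_cases hc : c ∈ D
  · exact congrArg Subtype.val (congrFun h ⟨c, hc⟩)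
  · rw [T.2.eq_zero_of_notMem c hc, T'.2.eq_zero_of_notMem c hc]

lemma numLinearExtensions_empty : numLinearExtensions (∅ : Finset α) = 1 := by
  refine Nat.card_eq_one_iff_exists.2 ⟨⟨0, by simp [StrictMonoOn], by simp, by simp⟩, fun T ↦ ?_⟩
  exact Subtype.ext (funext fun c ↦ T.2.eq_zero_of_notMem c (notMem_empty c))

namespace IsLinearExtension

variable {D : Finset α} {T T' : α → ℕ} {c : α}

lemma lt_card (hT : IsLinearExtension D T) (hc : c ∈ D) : T c < #D :=
  hT.bijOn.mapsTo hc

lemma maximal (hT : IsLinearExtension D T) (hc : c ∈ D) (hTc : T c = #D - 1) :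
    Maximal (· ∈ D) c := by
  refine ⟨hc, fun d hd hcd ↦ by_contra fun hdc ↦ ?_⟩
  have hlt := hT.strictMonoOn hc hd (lt_of_le_not_ge hcd hdc)
  have := hT.lt_card hd
  omega

lemma exists_maximal (hT : IsLinearExtension D T) (hD : D.Nonempty) :
    ∃ c, Maximal (· ∈ D) c ∧ T c = #D - 1 := by
  obtain ⟨c, hc, hTc⟩ := hT.bijOn.surjOn (Set.mem_Iio.2 (Nat.sub_one_lt hD.card_pos.ne'))
  exact ⟨c, hT.maximal hc hTc, hTc⟩

variable [DecidableEq α]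

lemma update_erase (hT : IsLinearExtension D T) (hc : c ∈ D) (hTc : T c = #D - 1) :
    IsLinearExtension (D.erase c) (Function.update T c 0) where
  strictMonoOn := (hT.strictMonoOn.mono (by simp)).congr fun d hd ↦
    (Function.update_of_ne (ne_of_mem_erase hd) _ _).symm
  bijOn := by
    have hIio : Set.Iio #(D.erase c) = Set.Iio #D \ {T c} := by
      ext k
      simp only [card_erase_of_mem hc, hTc, Set.mem_sdiff, Set.mem_Iio, Set.mem_singleton_iff]
      omega
    rw [hIio, coe_erase]
    exact (hT.bijOn.sdiff_singleton hc).congr fun d hd ↦ (Function.update_of_ne hd.2 _ _).symm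
  eq_zero_of_notMem d hd := by
    rcases eq_or_ne d c with rfl | hdc
    · simp
    · rw [Function.update_of_ne hdc]
      exact hT.eq_zero_of_notMem d fun h ↦ hd (mem_erase.2 ⟨hdc, h⟩)

lemma update_of_erase (hT : IsLinearExtension (D.erase c) T) (hc : Maximal (· ∈ D) c) :
    IsLinearExtension D (Function.update T c (#D - 1)) where
  strictMonoOn := by
    intro d hd e he hde
    have hdc : d ≠ c := by
      rintro rfl
      exact hde.not_ge (hc.le_of_ge he hde.le)
    rw [Function.update_of_ne hdc]
    have hd' := mem_erase.2 ⟨hdc, hd⟩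
    rcases eq_or_ne e c with rfl | hec
    · simpa [card_erase_of_mem hc.prop] using hT.lt_card hd'
    · rw [Function.update_of_ne hec]
      exact hT.strictMonoOn hd' (mem_erase.2 ⟨hec, he⟩) hde
  bijOn := by
    have hIio : Set.Iio #D = insert (Function.update T c (#D - 1) c) (Set.Iio #(D.erase c)) := by
      have := card_pos.2 ⟨c, hc.prop⟩
      ext k
      simp only [card_erase_of_mem hc.prop, Function.update_self, Set.mem_insert_iff, Set.mem_Iio]
      omega
    have hinsert : (D : Set α) = insert c ↑(D.erase c) := by
      rw [← coe_insert, insert_erase hc.prop]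
    rw [hIio, hinsert]
    refine (hT.bijOn.congr fun d hd ↦ ?_).insert ?_
    · exact (Function.update_of_ne (ne_of_mem_erase hd) _ _).symm
    · simp [card_erase_of_mem hc.prop]
  eq_zero_of_notMem d hd := by
    rw [Function.update_of_ne (ne_of_mem_of_not_mem hc.prop hd).symm]
    exact hT.eq_zero_of_notMem d fun h ↦ hd (mem_of_mem_erase h)

end IsLinearExtension

open scoped Classical in
/-- The element numbered last is maximal, and forgetting it leaves a linear extension of the
remaining elements. -/
theorem numLinearExtensions_eq_sum_erase [DecidableEq α] {D : Finset α} (hD : D.Nonempty) :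
    numLinearExtensions D = ∑ c ∈ D with Maximal (· ∈ D) c, numLinearExtensions (D.erase c) := by
  let extend : (Σ c : {c ∈ D | Maximal (· ∈ D) c}, {T // IsLinearExtension (D.erase c.1) T}) →
      {T // IsLinearExtension D T} :=
    fun p ↦ ⟨_, p.2.2.update_of_erase (mem_filter.1 p.1.2).2⟩
  have extend_injective : extend.Injective := by
    rintro ⟨⟨c, hc⟩, T, hT⟩ ⟨⟨c', hc'⟩, T', hT'⟩ h
    rw [mem_filter] at hc hc'
    have hupdate : Function.update T c (#D - 1) = Function.update T' c' (#D - 1) :=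
      congrArg Subtype.val h
    obtain rfl : c = c' := by
      refine (hT.update_of_erase hc.2).bijOn.injOn hc.1 hc'.1 ?_
      rw [Function.update_self, hupdate, Function.update_self]
    obtain rfl : T = T' := by
      funext d
      rcases eq_or_ne d c with rfl | hdc
      · rw [hT.eq_zero_of_notMem _ (notMem_erase _ _), hT'.eq_zero_of_notMem _ (notMem_erase _ _)]
      · simpa [hdc] using congrFun hupdate d
    rfl
  have extend_surjective : extend.Surjective := by
    rintro ⟨T, hT⟩
    obtain ⟨c, hc, hTc⟩ := hT.exists_maximal hD
    refine ⟨⟨⟨c, mem_filter.2 ⟨hc.prop, hc⟩⟩, ⟨_, hT.update_erase hc.prop hTc⟩⟩, Subtype.ext ?_⟩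
    simp [extend, ← hTc]
  rw [numLinearExtensions,
    ← Nat.card_eq_of_bijective extend ⟨extend_injective, extend_surjective⟩, Nat.card_sigma]
  exact sum_coe_sort _ fun c ↦ numLinearExtensions (D.erase c)

end LinearExtension

/-! ### Standard tableaux as linear extensions -/

open YoungDiagram (cellsOfRowLens)

lemma mem_cellsOfRowLens_iff_lt_getD {l : List ℕ} {c : ℕ × ℕ} :
    c ∈ cellsOfRowLens l ↔ c.2 < l.getD c.1 0 := by
  rw [YoungDiagram.mem_cellsOfRowLens]
  rcases lt_or_ge c.1 l.length with h | h
  · simp [h]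
  · simp [h.not_gt]

lemma card_cellsOfRowLens (l : List ℕ) : #(cellsOfRowLens l) = l.sum := by
  induction l with
  | nil => rfl
  | cons r l ih =>
    rw [cellsOfRowLens, card_union_of_disjoint, card_map, ih]
    · simp
    · simp [disjoint_left]

lemma antitone_getD_of_pairwise {l : List ℕ} (hl : l.Pairwise (· ≥ ·)) :
    Antitone fun i ↦ l.getD i 0 := by
  intro i j hij
  rcases lt_or_ge j l.length with hj | hj
  · simpa [hj, hij.trans_lt hj] using hl.sortedGE.getElem_ge_getElem_of_le hij
  · simp [hj]

lemma bijOn_Iio_iff_card_fiber {α : Type*} {D : Finset α} {f : α → ℕ} {n : ℕ} :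
    Set.BijOn f D (Set.Iio n) ↔ ∀ k, #{c ∈ D | f c = k} = if k < n then 1 else 0 := by
  constructor
  · intro h k
    split_ifs with hk
    · obtain ⟨c, hc, rfl⟩ := h.surjOn hk
      refine card_eq_one_iff_existsUnique.2 ⟨c, mem_filter.2 ⟨hc, rfl⟩, fun d hd ↦ ?_⟩
      exact h.injOn (mem_filter.1 hd).1 hc (mem_filter.1 hd).2
    · refine card_eq_zero.2 (filter_eq_empty_iff.2 ?_)
      rintro c hc rfl
      exact hk (h.mapsTo hc)
  · intro h
    have mapsTo : Set.MapsTo f D (Set.Iio n) := by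
      intro c hc
      by_contra hn
      have hempty : #{d ∈ D | f d = f c} = 0 := (h (f c)).trans (if_neg hn)
      exact filter_eq_empty_iff.1 (card_eq_zero.1 hempty) hc rfl
    refine ⟨mapsTo, fun c hc d hd hcd ↦ ?_, fun k hk ↦ ?_⟩
    · have hone : #{e ∈ D | f e = f d} = 1 := (h (f d)).trans (if_pos (mapsTo hd))
      exact card_le_one.1 hone.le c (mem_filter.2 ⟨hc, hcd⟩) d (mem_filter.2 ⟨hd, rfl⟩)
    · have hone : #{e ∈ D | f e = k} = 1 := (h k).trans (if_pos hk)
      obtain ⟨c, hc⟩ := card_pos.1 (hone.ge)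
      exact ⟨c, mem_filter.1 hc⟩

lemma hasContent_replicate_one_iff {l : List ℕ} {T : ℕ → ℕ → ℕ} {n : ℕ} :
    HasContent l T (List.replicate n 1) ↔
      Set.BijOn (Function.uncurry T) (cellsOfRowLens l) (Set.Iio n) := by
  rw [bijOn_Iio_iff_card_fiber]
  refine forall_congr' fun k ↦ ?_
  have hcells : Nat.card {c : ℕ × ℕ // c.2 < l.getD c.1 0 ∧ T c.1 c.2 = k} =
      #{c ∈ cellsOfRowLens l | Function.uncurry T c = k} :=
    Nat.subtype_card _ fun c ↦ by
      rw [mem_filter, mem_cellsOfRowLens_iff_lt_getD, Function.uncurry_def]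
  have hparts : (List.replicate n 1).getD k 0 = if k < n then 1 else 0 := by
    split_ifs with hk <;> simp [hk]
  rw [hcells, hparts]

lemma IsSSYT.strictMonoOn_of_injOn {l : List ℕ} {T : ℕ → ℕ → ℕ} (hT : IsSSYT l T)
    (hinj : Set.InjOn (Function.uncurry T) (cellsOfRowLens l)) :
    StrictMonoOn (Function.uncurry T) (cellsOfRowLens l) := by
  rintro ⟨i, j⟩ hc ⟨i', j'⟩ hc' hlt
  obtain ⟨row_le, col_lt, -⟩ := hT
  have hij' : j' < l.getD i' 0 := mem_cellsOfRowLens_iff_lt_getD.1 hc'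
  have hle : T i j ≤ T i' j' := by
    obtain ⟨hi : i ≤ i', hj : j ≤ j'⟩ := hlt.le
    rcases hi.eq_or_lt with rfl | hi
    · exact row_le _ _ _ hj hij'
    · exact (col_lt _ _ _ hi (hj.trans_lt hij')).le.trans (row_le _ _ _ hj hij')
  exact hle.lt_of_ne fun h ↦ hlt.ne (hinj hc hc' h)

lemma isSSYT_of_strictMonoOn {l : List ℕ} (hl : l.Pairwise (· ≥ ·)) {T : ℕ → ℕ → ℕ}
    (hmono : StrictMonoOn (Function.uncurry T) (cellsOfRowLens l))
    (hzero : ∀ c ∉ cellsOfRowLens l, Function.uncurry T c = 0) : IsSSYT l T := by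
  simp only [mem_cellsOfRowLens_iff_lt_getD, Prod.forall, Function.uncurry_apply_pair] at hzero
  refine ⟨fun i j j' hj hj' ↦ ?_, fun i i' j hi hj ↦ ?_, fun i j h ↦ hzero i j h.not_gt⟩
  · exact hmono.monotoneOn (mem_cellsOfRowLens_iff_lt_getD.2 (hj.trans_lt hj'))
      (mem_cellsOfRowLens_iff_lt_getD.2 hj') (Prod.mk_le_mk.2 ⟨le_rfl, hj⟩)
  · have hj' := hj.trans_le (antitone_getD_of_pairwise hl hi.le)
    exact hmono (mem_cellsOfRowLens_iff_lt_getD.2 hj')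
      (mem_cellsOfRowLens_iff_lt_getD.2 hj) (Prod.mk_lt_mk_iff_left.2 hi)

theorem fSYT_eq_numLinearExtensions {l : List ℕ} (hl : l.Pairwise (· ≥ ·)) :
    fSYT l = numLinearExtensions (cellsOfRowLens l) := by
  refine Nat.card_congr ((Equiv.curry ℕ ℕ ℕ).symm.subtypeEquiv fun T ↦ ?_)
  change _ ↔ IsLinearExtension _ (Function.uncurry T)
  rw [hasContent_replicate_one_iff, ← card_cellsOfRowLens]
  constructor
  · rintro ⟨hT, hbij⟩
    refine ⟨hT.strictMonoOn_of_injOn hbij.injOn, hbij, fun c hc ↦ ?_⟩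
    exact hT.2.2 _ _ (not_lt.1 (mem_cellsOfRowLens_iff_lt_getD.not.1 hc))
  · rintro ⟨hmono, hbij, hzero⟩
    exact ⟨isSSYT_of_strictMonoOn hl hmono hzero, hbij⟩

/-! ### The branching rule and the Frobenius formula -/

lemma maximal_mem_cellsOfRowLens_iff {l : List ℕ} (hl : l.Pairwise (· ≥ ·)) {c : ℕ × ℕ} :
    Maximal (· ∈ cellsOfRowLens l) c ↔
      l.getD (c.1 + 1) 0 < l.getD c.1 0 ∧ c.2 + 1 = l.getD c.1 0 := by
  obtain ⟨i, j⟩ := c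
  simp only [Maximal, mem_cellsOfRowLens_iff_lt_getD, Prod.forall, Prod.mk_le_mk]
  constructor
  · rintro ⟨hj, hmax⟩
    have hright := mt (hmax i (j + 1) · ⟨le_rfl, j.le_succ⟩)
    have hbelow := mt (hmax (i + 1) j · ⟨i.le_succ, le_rfl⟩)
    omega
  · rintro ⟨hcorner, hj⟩
    refine ⟨by omega, fun i' j' hj' ⟨hi, _⟩ ↦ ?_⟩
    rcases hi.eq_or_lt with rfl | hi
    · omega
    · have := antitone_getD_of_pairwise hl (Nat.succ_le_of_lt hi)
      simp only [Nat.succ_eq_add_one] at this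
      omega

lemma erase_cellsOfRowLens {l : List ℕ} {i j : ℕ} (hj : j + 1 = l.getD i 0) :
    (cellsOfRowLens l).erase (i, j) = cellsOfRowLens (l.set i j) := by
  have hi : i < l.length := by
    by_contra hi
    simp [hi] at hj
  ext ⟨i', j'⟩
  rw [mem_erase, mem_cellsOfRowLens_iff_lt_getD, mem_cellsOfRowLens_iff_lt_getD]
  rcases eq_or_ne i' i with rfl | hi'
  · simp only [ne_eq, Prod.mk.injEq, true_and, List.getD_eq_getElem?_getD,
      List.getElem?_set_self hi, Option.getD_some] at hj ⊢
    omega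
  · simp [hi', List.getElem?_set_ne hi'.symm]

theorem numLinearExtensions_cellsOfRowLens_eq_sum {l : List ℕ} (hl : l.Pairwise (· ≥ ·))
    (hsum : 0 < l.sum) :
    numLinearExtensions (cellsOfRowLens l) =
      ∑ i ∈ range l.length with l.getD (i + 1) 0 < l.getD i 0,
        numLinearExtensions (cellsOfRowLens (l.set i (l.getD i 0 - 1))) := by
  rw [numLinearExtensions_eq_sum_erase (card_pos.1 (by rwa [card_cellsOfRowLens]))]
  simp only [maximal_mem_cellsOfRowLens_iff hl]
  refine sum_nbij' Prod.fst (fun i ↦ (i, l.getD i 0 - 1)) ?_ ?_ ?_ ?_ ?_ <;>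
    simp only [mem_filter, mem_range, mem_cellsOfRowLens_iff_lt_getD]
  · rintro ⟨i, j⟩ ⟨hj, hcorner, -⟩
    refine ⟨?_, hcorner⟩
    by_contra hi
    simp [hi] at hj
  · intro i hi
    omega
  · rintro ⟨i, j⟩ ⟨-, -, hj⟩
    rw [← hj, Nat.add_sub_cancel]
  · exact fun _ _ ↦ trivial
  · rintro ⟨i, j⟩ ⟨-, -, hj : j + 1 = l.getD i 0⟩
    rw [erase_cellsOfRowLens hj, ← hj, Nat.add_sub_cancel]

open scoped Nat

/-- The number of standard Young tableaux of shape `(x, y, z)` according to the Frobenius formula,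
the determinantal form of the hook length formula. It is rational-valued to allow the division
and the subtractions. -/
noncomputable def frobeniusCount (x y z : ℕ) : ℚ :=
  (x + y + z)! * (((x : ℚ) - y + 1) * (x - z + 2) * (y - z + 1)) / ((x + 2)! * (y + 1)! * z !)

section Removal

variable {x y z n : ℕ}

lemma frobeniusCount_pred_first (hyx : y ≤ x) (hn : x + y + z = n + 1) :
    (if y < x then frobeniusCount (x - 1) y z else 0) =
      n ! / ((x + 2)! * (y + 1)! * z !) *
        ((x + 2) * (((x : ℚ) - y) * (x - z + 1) * (y - z + 1))) := by
  split_ifs with h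
  · obtain ⟨x, rfl⟩ : ∃ x', x = x' + 1 := ⟨x - 1, by omega⟩
    obtain rfl : x + y + z = n := by omega
    have hx : (x + 1 + 2)! = (x + 3) * (x + 2)! := Nat.factorial_succ (x + 2)
    rw [frobeniusCount, Nat.add_sub_cancel, hx]
    push_cast
    field_simp
    ring
  · obtain rfl : x = y := by omega
    simp

lemma frobeniusCount_pred_second (hzy : z ≤ y) (hn : x + y + z = n + 1) :
    (if z < y then frobeniusCount x (y - 1) z else 0) =
      n ! / ((x + 2)! * (y + 1)! * z !) *
        ((y + 1) * (((x : ℚ) - y + 2) * (x - z + 2) * (y - z))) := by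
  split_ifs with h
  · obtain ⟨y, rfl⟩ : ∃ y', y = y' + 1 := ⟨y - 1, by omega⟩
    obtain rfl : x + y + z = n := by omega
    have hy : (y + 1 + 1)! = (y + 2) * (y + 1)! := Nat.factorial_succ (y + 1)
    rw [frobeniusCount, Nat.add_sub_cancel, hy]
    push_cast
    field_simp
    ring
  · obtain rfl : y = z := by omega
    simp

lemma frobeniusCount_pred_third (hn : x + y + z = n + 1) :
    (if 0 < z then frobeniusCount x y (z - 1) else 0) =
      n ! / ((x + 2)! * (y + 1)! * z !) *
        (z * (((x : ℚ) - y + 1) * (x - z + 3) * (y - z + 2))) := by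
  split_ifs with h
  · obtain ⟨z, rfl⟩ : ∃ z', z = z' + 1 := ⟨z - 1, by omega⟩
    obtain rfl : x + y + z = n := by omega
    rw [frobeniusCount, Nat.add_sub_cancel, Nat.factorial_succ z]
    push_cast
    field_simp
    ring
  · obtain rfl : z = 0 := by omega
    simp

theorem frobeniusCount_eq_sum_pred (hyx : y ≤ x) (hzy : z ≤ y) (hn : x + y + z = n + 1) :
    frobeniusCount x y z = (if y < x then frobeniusCount (x - 1) y z else 0) +
      (if z < y then frobeniusCount x (y - 1) z else 0) +
      (if 0 < z then frobeniusCount x y (z - 1) else 0) := by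
  rw [frobeniusCount_pred_first hyx hn, frobeniusCount_pred_second hzy hn,
    frobeniusCount_pred_third hn, frobeniusCount, hn, Nat.factorial_succ]
  have hn' : (n : ℚ) + 1 = x + y + z := by exact_mod_cast hn.symm
  push_cast
  rw [hn']
  ring

end Removal

theorem numLinearExtensions_three_rows {x y z : ℕ} (hyx : y ≤ x) (hzy : z ≤ y) :
    (numLinearExtensions (cellsOfRowLens [x, y, z]) : ℚ) = frobeniusCount x y z := by
  induction hn : x + y + z generalizing x y z with
  | zero =>
    obtain ⟨rfl, rfl, rfl⟩ : x = 0 ∧ y = 0 ∧ z = 0 := by omega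
    have hempty : cellsOfRowLens [0, 0, 0] = ∅ := rfl
    rw [hempty, numLinearExtensions_empty]
    norm_num [frobeniusCount]
  | succ n ih =>
    have hsorted : [x, y, z].Pairwise (· ≥ ·) := by simp [hyx, hzy, hzy.trans hyx]
    have hsum : 0 < [x, y, z].sum := by simp only [List.sum_cons]; omega
    rw [numLinearExtensions_cellsOfRowLens_eq_sum hsorted hsum,
      frobeniusCount_eq_sum_pred hyx hzy hn, sum_filter]
    have hrows : range [x, y, z].length = {0, 1, 2} := rfl
    rw [hrows, sum_insert (by decide), sum_insert (by decide), sum_singleton, ← add_assoc]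
    push_cast
    congr 1
    · congr 1
      · refine ite_congr rfl (fun (h : y < x) ↦ ?_) fun _ ↦ rfl
        exact ih (x := x - 1) (by omega) hzy (by omega)
      · refine ite_congr rfl (fun (h : z < y) ↦ ?_) fun _ ↦ rfl
        exact ih (y := y - 1) (by omega) (by omega) (by omega)
    · refine ite_congr rfl (fun (h : 0 < z) ↦ ?_) fun _ ↦ rfl
      exact ih (z := z - 1) hyx (by omega) (by omega)

theorem fSYT_eq_frobeniusCount {l : List ℕ} (hl : l.Pairwise (· ≥ ·)) (hlen : l.length ≤ 3) :
    (fSYT l : ℚ) = frobeniusCount (l.getD 0 0) (l.getD 1 0) (l.getD 2 0) := by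
  have hcells : cellsOfRowLens l = cellsOfRowLens [l.getD 0 0, l.getD 1 0, l.getD 2 0] := by
    ext ⟨i, j⟩
    rw [mem_cellsOfRowLens_iff_lt_getD, mem_cellsOfRowLens_iff_lt_getD]
    rcases i with _ | _ | _ | i
    · rfl
    · rfl
    · rfl
    · simp [List.getElem?_eq_none (by omega : l.length ≤ i + 3)]
  have hanti := antitone_getD_of_pairwise hl
  rw [fSYT_eq_numLinearExtensions hl, hcells]
  exact numLinearExtensions_three_rows (hanti zero_le_one) (hanti one_le_two)

/-! ### Moving a box to a lower row -/

section BoxMoves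

variable (x y z : ℕ)

lemma frobeniusCount_succ_first : frobeniusCount (x + 1) y z =
    (x + y + z + 1)! / ((x + 2)! * (y + 1)! * z !) *
      (((x : ℚ) - y + 2) * (x - z + 3) * (y - z + 1) / (x + 3)) := by
  have hx : (x + 1 + 2)! = (x + 3) * (x + 2)! := Nat.factorial_succ (x + 2)
  have hn : x + 1 + y + z = x + y + z + 1 := by ring
  rw [frobeniusCount, hx, hn]
  push_cast
  field_simp
  ring

lemma frobeniusCount_succ_second : frobeniusCount x (y + 1) z =
    (x + y + z + 1)! / ((x + 2)! * (y + 1)! * z !) *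
      (((x : ℚ) - y) * (x - z + 2) * (y - z + 2) / (y + 2)) := by
  have hy : (y + 1 + 1)! = (y + 2) * (y + 1)! := Nat.factorial_succ (y + 1)
  have hn : x + (y + 1) + z = x + y + z + 1 := by ring
  rw [frobeniusCount, hy, hn]
  push_cast
  field_simp
  ring

lemma frobeniusCount_succ_third : frobeniusCount x y (z + 1) =
    (x + y + z + 1)! / ((x + 2)! * (y + 1)! * z !) *
      (((x : ℚ) - y + 1) * (x - z + 1) * (y - z) / (z + 1)) := by
  rw [frobeniusCount, ← add_assoc, Nat.factorial_succ z]
  push_cast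
  field_simp
  ring

lemma frobeniusCount_succ_first_lt_succ_second_iff :
    frobeniusCount (x + 1) y z < frobeniusCount x (y + 1) z ↔
      ((x : ℚ) - y + 2) * (x - z + 3) * (y - z + 1) * (y + 2) <
        (x - y) * (x - z + 2) * (y - z + 2) * (x + 3) := by
  rw [frobeniusCount_succ_first, frobeniusCount_succ_second,
    mul_lt_mul_iff_right₀ (by positivity), div_lt_div_iff₀ (by positivity) (by positivity)]

lemma frobeniusCount_succ_first_lt_succ_third_iff :
    frobeniusCount (x + 1) y z < frobeniusCount x y (z + 1) ↔
      ((x : ℚ) - y + 2) * (x - z + 3) * (y - z + 1) * (z + 1) <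
        (x - y + 1) * (x - z + 1) * (y - z) * (x + 3) := by
  rw [frobeniusCount_succ_first, frobeniusCount_succ_third,
    mul_lt_mul_iff_right₀ (by positivity), div_lt_div_iff₀ (by positivity) (by positivity)]

lemma frobeniusCount_succ_second_lt_succ_third_iff :
    frobeniusCount x (y + 1) z < frobeniusCount x y (z + 1) ↔
      ((x : ℚ) - y) * (x - z + 2) * (y - z + 2) * (z + 1) <
        (x - y + 1) * (x - z + 1) * (y - z) * (y + 2) := by
  rw [frobeniusCount_succ_second, frobeniusCount_succ_third,
    mul_lt_mul_iff_right₀ (by positivity), div_lt_div_iff₀ (by positivity) (by positivity)]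

end BoxMoves

lemma frobeniusCount_succ_first_lt_of_le_one {x y z : ℕ} (hx : 4 ≤ x) (hzy : z ≤ y)
    (hy : y ≤ 1) : frobeniusCount (x + 1) y z < frobeniusCount x (y + 1) z := by
  rw [frobeniusCount_succ_first_lt_succ_second_iff, ← sub_pos]
  obtain ⟨w, rfl⟩ := Nat.exists_eq_add_of_le hx
  interval_cases y <;> interval_cases z <;> push_cast <;> ring_nf <;> positivity

lemma frobeniusCount_succ_second_zero_lt {x y : ℕ} (hy : 1 ≤ y) (hyx : y + 1 ≤ x) :
    frobeniusCount x (y + 1) 0 < frobeniusCount x y 1 := by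
  rw [frobeniusCount_succ_second_lt_succ_third_iff, ← sub_pos]
  obtain ⟨d, rfl⟩ := Nat.exists_eq_add_of_le hyx
  obtain ⟨t, rfl⟩ := Nat.exists_eq_add_of_le hy
  push_cast
  ring_nf
  positivity

lemma frobeniusCount_succ_second_one_lt {x y : ℕ} (hy : 3 ≤ y) (hyx : y + 1 ≤ x) :
    frobeniusCount x (y + 1) 1 < frobeniusCount x y 2 := by
  rw [frobeniusCount_succ_second_lt_succ_third_iff, ← sub_pos]
  obtain ⟨d, rfl⟩ := Nat.exists_eq_add_of_le hyx
  obtain ⟨t, rfl⟩ := Nat.exists_eq_add_of_le hy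
  push_cast
  ring_nf
  positivity

lemma frobeniusCount_succ_first_one_lt {x y : ℕ} (hy : 2 ≤ y) (hyx : y + 1 ≤ x)
    (hxy : 7 ≤ x + y) : frobeniusCount (x + 1) y 1 < frobeniusCount x y 2 := by
  rw [frobeniusCount_succ_first_lt_succ_third_iff, ← sub_pos]
  rcases hy.eq_or_lt with rfl | hy
  · obtain ⟨w, rfl⟩ := Nat.exists_eq_add_of_le (show 5 ≤ x by omega)
    push_cast
    ring_nf
    positivity
  · obtain ⟨d, rfl⟩ := Nat.exists_eq_add_of_le hyx
    obtain ⟨t, rfl⟩ := Nat.exists_eq_add_of_le (Nat.succ_le_of_lt hy)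
    push_cast
    ring_nf
    positivity

/-- For `x = y + 1 + b`, the left-hand side is the difference of the two sides of
`frobeniusCount_succ_first_lt_succ_second_iff` at `z = 2`. The factor `(b + 1) (b + 2) - 2 (y + 1)`
is even, so if it is negative it is at most `-2`, and the first product at least cancels the
second. -/
lemma box_move_difference_pos_iff {y b : ℕ} (hy : 2 ≤ y) :
    (0 : ℚ) < ((b + 1) * (b + 2) - 2 * (y + 1)) * ((y + 1) ^ 2 + b * y - 3) +
        4 * ((b + 1) * (b + 3)) ↔
      2 * (y + 1) ≤ (b + 1) * (b + 2) := by
  constructor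
  · contrapose!
    intro hlt
    have hgap : (b + 1) * (b + 2) + 2 ≤ 2 * (y + 1) := by
      obtain ⟨k, hk⟩ := Nat.even_mul_succ_self (b + 1)
      have : (b + 1) * (b + 2) = k + k := hk
      omega
    have hby : b + 2 ≤ y := by
      by_contra!
      have : 1 ≤ b := by omega
      nlinarith
    have hfactor : 2 * (((b : ℚ) + 1) * (b + 3)) ≤ (y + 1) ^ 2 + b * y - 3 := by
      have hby' : (b : ℚ) + 2 ≤ y := by exact_mod_cast hby
      have : ((b : ℚ) + 2) * (2 * (b + 2)) ≤ y * (y + b + 2) := by gcongr; linarith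
      linarith
    have hfactor_nonneg : (0 : ℚ) ≤ (y + 1) ^ 2 + b * y - 3 := le_trans (by positivity) hfactor
    have hgap' : ((b : ℚ) + 1) * (b + 2) + 2 ≤ 2 * (y + 1) := by exact_mod_cast hgap
    linarith [mul_nonneg (sub_nonneg.2 hgap') hfactor_nonneg]
  · intro hle
    have hle' : (2 : ℚ) * (y + 1) ≤ (b + 1) * (b + 2) := by exact_mod_cast hle
    have hfactor : (0 : ℚ) ≤ (y + 1) ^ 2 + b * y - 3 := by
      have hy' : (2 : ℚ) ≤ y := by exact_mod_cast hy
      have : (0 : ℚ) ≤ b * y := by positivity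
      nlinarith
    have := mul_nonneg (sub_nonneg.2 hle') hfactor
    positivity

theorem frobeniusCount_succ_first_two_lt_iff {x y b : ℕ} (hy : 2 ≤ y) (hx : x = y + 1 + b) :
    frobeniusCount (x + 1) y 2 < frobeniusCount x (y + 1) 2 ↔
      2 * (y + 1) ≤ (b + 1) * (b + 2) := by
  rw [frobeniusCount_succ_first_lt_succ_second_iff, ← sub_pos,
    ← box_move_difference_pos_iff hy, hx]
  push_cast
  ring_nf

/-! ### Partitions dominating a three-row partition -/

/-- `(x, y, z)` is a partition of `p + q + r`, possibly with zero parts, that dominates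
`(p, q, r)`. Since the sizes agree, dominance in the second partial sum is encoded as `z ≤ r`. -/
structure ThreeRowDominates (p q r x y z : ℕ) : Prop where
  second_le_first : y ≤ x
  third_le_second : z ≤ y
  le_first : p ≤ x
  third_le : z ≤ r
  sum_eq : x + y + z = p + q + r

lemma frobeniusCount_succ_first_two_lt {a b x y : ℕ} (hab : 2 * a ≤ (b + 1) * (b + 2))
    (hy : 2 ≤ y) (hya : y < a) (hsum : x + y + 1 = 2 * a + b) :
    frobeniusCount (x + 1) y 2 < frobeniusCount x (y + 1) 2 := by
  refine (frobeniusCount_succ_first_two_lt_iff (b := x - y - 1) hy (by omega)).2 ?_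
  calc 2 * (y + 1) ≤ 2 * a := by omega
    _ ≤ (b + 1) * (b + 2) := hab
    _ ≤ (x - y - 1 + 1) * (x - y - 1 + 2) := by gcongr <;> omega

/-- Moving a box to a lower row decreases `2 * x + y`. -/
lemma ThreeRowDominates.exists_frobeniusCount_lt {a b x y z : ℕ} (ha : 3 ≤ a)
    (hab : 2 * a ≤ (b + 1) * (b + 2)) (h : ThreeRowDominates (a + b) a 2 x y z)
    (hne : ¬(y = a ∧ z = 2)) :
    ∃ x' y' z', ThreeRowDominates (a + b) a 2 x' y' z' ∧ 2 * x' + y' < 2 * x + y ∧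
      frobeniusCount x y z < frobeniusCount x' y' z' := by
  obtain ⟨hyx, hzy, hx, hz, hsum⟩ := h
  have hb : 1 ≤ b := Nat.pos_of_ne_zero fun hb ↦ by subst hb; omega
  obtain ⟨x, rfl⟩ := Nat.exists_eq_add_of_le' (show 1 ≤ x by omega)
  rcases le_or_gt y 1 with hy | hy
  · exact ⟨x, y + 1, z, by constructor <;> omega, by omega,
      frobeniusCount_succ_first_lt_of_le_one (by omega) hzy hy⟩
  obtain ⟨y, rfl⟩ := Nat.exists_eq_add_of_le' hy.le
  interval_cases z
  · exact ⟨x + 1, y, 1, by constructor <;> omega, by omega,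
      frobeniusCount_succ_second_zero_lt (by omega) hyx⟩
  · rcases le_or_gt (y + 1) a with hya | hya
    · exact ⟨x, y + 1, 2, by constructor <;> omega, by omega,
        frobeniusCount_succ_first_one_lt hy (by omega) (by omega)⟩
    · exact ⟨x + 1, y, 2, by constructor <;> omega, by omega,
        frobeniusCount_succ_second_one_lt (by omega) hyx⟩
  · exact ⟨x, y + 1 + 1, 2, by constructor <;> omega, by omega,
      frobeniusCount_succ_first_two_lt hab hy (by omega) (by omega)⟩

theorem ThreeRowDominates.frobeniusCount_lt {a b x y z : ℕ} (ha : 3 ≤ a)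
    (hab : 2 * a ≤ (b + 1) * (b + 2)) (h : ThreeRowDominates (a + b) a 2 x y z)
    (hne : ¬(y = a ∧ z = 2)) : frobeniusCount x y z < frobeniusCount (a + b) a 2 := by
  induction hmeasure : 2 * x + y using Nat.strong_induction_on generalizing x y z with
  | _ k ih =>
    subst hmeasure
    obtain ⟨x', y', z', h', hdecrease, hlt⟩ := h.exists_frobeniusCount_lt ha hab hne
    by_cases heq : y' = a ∧ z' = 2
    · obtain ⟨rfl, rfl⟩ := heq
      obtain rfl : x' = y' + b := by have := h'.sum_eq; omega
      exact hlt
    · exact hlt.trans (ih _ hdecrease h' heq rfl)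

lemma sum_take_eq_sum_getD (l : List ℕ) (k : ℕ) : (l.take k).sum = ∑ i ∈ range k, l.getD i 0 := by
  induction l generalizing k with
  | nil => simp
  | cons r l ih => cases k <;> simp [sum_range_succ', ih, add_comm]

lemma DomLE.length_le {l m : List ℕ} (h : DomLE l m) (hsum : l.sum = m.sum)
    (hm : ∀ x ∈ m, 0 < x) : m.length ≤ l.length := by
  have hle : m.sum ≤ (m.take l.length).sum := by simpa [← hsum] using h l.length
  have hdrop : (m.drop l.length).sum = 0 := by
    have := m.sum_take_add_sum_drop l.length
    omega
  have hnil : m.drop l.length = [] := List.eq_nil_iff_forall_not_mem.2 fun x hx ↦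
    (hm x (List.mem_of_mem_drop hx)).ne' (List.sum_eq_zero_iff.1 hdrop x hx)
  exact List.drop_eq_nil_iff.1 hnil

lemma DomLE.threeRowDominates {p q r : ℕ} {m : List ℕ} (h : DomLE [p, q, r] m)
    (hm : IsPartitionOf (p + q + r) m) :
    ThreeRowDominates p q r (m.getD 0 0) (m.getD 1 0) (m.getD 2 0) := by
  obtain ⟨hsorted, hpos, hsum⟩ := hm
  have hanti := antitone_getD_of_pairwise hsorted
  have hlen : m.length ≤ 3 := h.length_le (by simp [hsum, add_assoc]) hpos
  have hone := h 1
  have htwo := h 2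
  have hsum_getD : m.sum = m.getD 0 0 + m.getD 1 0 + m.getD 2 0 := by
    rw [← m.take_of_length_le hlen, sum_take_eq_sum_getD]
    simp [sum_range_succ]
  simp only [sum_take_eq_sum_getD, sum_range_succ, range_zero, sum_empty, zero_add,
    List.getD_cons_zero, List.getD_cons_succ] at hone htwo
  exact ⟨hanti zero_le_one, hanti one_le_two, hone, by omega, by omega⟩

lemma fSYT_three_rows {x y z : ℕ} (hyx : y ≤ x) (hzy : z ≤ y) :
    (fSYT [x, y, z] : ℚ) = frobeniusCount x y z :=
  fSYT_eq_frobeniusCount (by simp [hyx, hzy, hzy.trans hyx]) le_rfl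

theorem fSYT_lt_of_domLE {a b : ℕ} (ha : 3 ≤ a) (hab : 2 * a ≤ (b + 1) * (b + 2)) {m : List ℕ}
    (hm : IsPartitionOf (a + b + a + 2) m) (hdom : DomLE [a + b, a, 2] m)
    (hne : m ≠ [a + b, a, 2]) : fSYT m < fSYT [a + b, a, 2] := by
  have hrows := hdom.threeRowDominates hm
  have hlen : m.length ≤ 3 := hdom.length_le (by simp [hm.2.2, add_assoc]) hm.2.1
  have hne' : ¬(m.getD 1 0 = a ∧ m.getD 2 0 = 2) := by
    rintro ⟨hsecond, hthird⟩
    have hlen' : 2 < m.length := by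
      by_contra! h
      simp [h] at hthird
    obtain ⟨x, y, z, rfl⟩ := List.length_eq_three.1 (le_antisymm hlen hlen')
    obtain rfl : y = a := hsecond
    obtain rfl : z = 2 := hthird
    obtain rfl : x = y + b := by simpa using hrows.sum_eq
    exact hne rfl
  have hlt := hrows.frobeniusCount_lt ha hab hne'
  rw [← fSYT_eq_frobeniusCount hm.1 hlen, ← fSYT_three_rows (by omega) (by omega)] at hlt
  exact_mod_cast hlt

theorem fSYT_succ_first_two_lt_iff {a b : ℕ} (ha : 2 ≤ a) :
    fSYT [a + b + 2, a, 2] < fSYT [a + b + 1, a + 1, 2] ↔ 2 * (a + 1) ≤ (b + 1) * (b + 2) := by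
  rw [← frobeniusCount_succ_first_two_lt_iff ha (add_right_comm a b 1),
    ← fSYT_three_rows (by omega) ha, ← fSYT_three_rows (by omega) (by omega), Nat.cast_lt]

lemma isPartitionOf_three_rows {x y z : ℕ} (hyx : y ≤ x) (hzy : z ≤ y) (hz : 0 < z) :
    IsPartitionOf (x + y + z) [x, y, z] :=
  ⟨by simp [hyx, hzy, hzy.trans hyx], by simp [hz, hz.trans_le hzy, (hz.trans_le hzy).trans_le hyx],
    by simp [add_assoc]⟩

lemma domLE_succ_first (x y : ℕ) (l : List ℕ) :
    DomLE (x :: (y + 1) :: l) ((x + 1) :: y :: l) := by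
  rintro (_ | _ | k) <;> simp only [List.take_zero, List.take_succ_cons, List.sum_cons] <;> omega

theorem exists_stdLE_of_lt {a b : ℕ} (ha : 3 ≤ a) (hab : (b + 1) * (b + 2) < 2 * a) :
    ∃ m, IsPartitionOf (a + b + a + 2) m ∧ m ≠ [a + b, a, 2] ∧ StdLE [a + b, a, 2] m := by
  obtain ⟨y, rfl⟩ := Nat.exists_eq_add_of_le' (show 1 ≤ a by omega)
  rw [add_right_comm y 1 b]
  refine ⟨[y + b + 2, y, 2], ?_, by simp, domLE_succ_first _ _ _, ?_⟩
  · have hsize : y + b + 1 + (y + 1) + 2 = y + b + 2 + y + 2 := by ring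
    rw [hsize]
    exact isPartitionOf_three_rows (by omega) (by omega) two_pos
  · exact not_lt.1 ((fSYT_succ_first_two_lt_iff (by omega)).not.2 hab.not_ge)

/-- `(a+b, a, 2)` is maximal in the standard immersion poset on
partitions of `2a+b+2` if and only if `a ≤ (b+1)(b+2)/2`. -/
theorem std_maximal_three_row_two (a b : ℕ) (ha : 3 ≤ a) :
    StdMaximal (2 * a + b + 2) [a + b, a, 2] ↔ a ≤ (b + 1) * (b + 2) / 2 := by
  have hsize : 2 * a + b + 2 = a + b + a + 2 := by ring
  rw [Nat.le_div_iff_mul_le two_pos, mul_comm a, hsize]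
  constructor
  · intro hmax
    by_contra! hab
    obtain ⟨m, hm, hne, hle⟩ := exists_stdLE_of_lt ha hab
    exact hmax m hm hne hle
  · intro hab m hm hne hle
    exact (fSYT_lt_of_domLE ha hab hm hle.1 hne).not_ge hle.2
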